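/- arXiv:1709.09152 — 7 statements merged into one kernel-verified Lean document; each statement's English description precedes it below -/
import Mathlib

section
/- Let n ≥ 1 be an integer, let d be a real number with 2 ≤ d ≤ n, let r ≥ 1 be an integer, and let u and v be two fixed distinct vertices. Let p_r denote the probability that the Erdős–Rényi random graph G(n, d/n) contains a path of length at most r between u and v. Then d/n ≤ p_r ≤ 2 d^r / n. -/
/-!
Lower bound: the edge `uv` alone is a path of length one and is present with probability `d / n`
(`erdosRenyi_forall_mem` for a single edge).

Upper bound: a first-moment estimate. If `u` and `v` are joined by a path of length at most `r`,
then some path of length `k + 1 ≤ r` of the complete graph has all its edges present. The complete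
graph has at most `n ^ k` walks of length `k + 1` from `u` to `v`
(`card_finsetWalkLength_top_le`), since only the `k` inner vertices are free, and a path of length
`k + 1` has `k + 1` distinct edges, so it is present with probability `(d / n) ^ (k + 1)`. The union
bound gives `∑_{k < r} n ^ k (d / n) ^ (k + 1) = (∑_{k < r} d ^ (k + 1)) / n`, and the geometric
sum is at most `2 d ^ r` because `d ≥ 2` (`sum_pow_succ_le`).
-/

open MeasureTheory
open scoped NNReal ENNReal

/-- The Bernoulli measure on `Bool` with success probability `p`. -/
noncomputable def bernoulliMeasure (p : ℝ≥0) : Measure Bool :=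
  p • Measure.dirac true + (1 - p) • Measure.dirac false

/-- The Erdős–Rényi random graph measure: each potential edge (an element of
`Sym2 (Fin n)`) is present independently with probability `p`. -/
noncomputable def erdosRenyi (n : ℕ) (p : ℝ≥0) : Measure (Sym2 (Fin n) → Bool) :=
  Measure.pi fun _ => bernoulliMeasure p

/-- The simple graph on `Fin n` determined by an edge-indicator function. -/
def graphOf {n : ℕ} (ω : Sym2 (Fin n) → Bool) : SimpleGraph (Fin n) :=
  SimpleGraph.fromEdgeSet {e | ω e = true}

theorem isProbabilityMeasure_bernoulliMeasure {p : ℝ≥0} (hp : p ≤ 1) :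
    IsProbabilityMeasure (bernoulliMeasure p) := by
  constructor
  have h : (p : ℝ≥0∞) + ((1 - p : ℝ≥0) : ℝ≥0∞) = 1 := by
    rw [← ENNReal.coe_add, add_tsub_cancel_of_le hp, ENNReal.coe_one]
  simpa [bernoulliMeasure] using h

theorem bernoulliMeasure_true (p : ℝ≥0) : bernoulliMeasure p {true} = p := by
  simp [bernoulliMeasure]

/-- By independence, a fixed set of `#S` potential edges is present with probability
`p ^ #S`. -/
theorem erdosRenyi_forall_mem (n : ℕ) {p : ℝ≥0} (hp : p ≤ 1) (S : Finset (Sym2 (Fin n))) :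
    erdosRenyi n p {ω | ∀ e ∈ S, ω e = true} = (p : ℝ≥0∞) ^ S.card := by
  classical
  have := isProbabilityMeasure_bernoulliMeasure hp
  have hset : {ω : Sym2 (Fin n) → Bool | ∀ e ∈ S, ω e = true}
      = Set.univ.pi fun e => if e ∈ S then {true} else Set.univ := by
    ext ω
    simp only [Set.mem_ofPred_eq, Set.mem_pi, Set.mem_univ, forall_true_left]
    refine forall_congr' fun e => ?_
    by_cases he : e ∈ S <;> simp [he]
  rw [hset, erdosRenyi, Measure.pi_pi]
  have hfac : ∀ e, bernoulliMeasure p (if e ∈ S then {true} else Set.univ)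
      = if e ∈ S then (p : ℝ≥0∞) else 1 := by
    intro e
    split_ifs
    · exact bernoulliMeasure_true p
    · exact measure_univ
  simp_rw [hfac]
  rw [Finset.prod_ite_mem, Finset.univ_inter, Finset.prod_const]

/-- The complete graph on `n` vertices has at most `n ^ k` walks of length `k + 1` with prescribed
endpoints; they are counted by the entries of a power of the adjacency matrix. -/
theorem card_finsetWalkLength_top_le (n k : ℕ) (u v : Fin n) :
    ((⊤ : SimpleGraph (Fin n)).finsetWalkLength (k + 1) u v).card ≤ n ^ k := by
  have key : ∀ (k : ℕ) (u v : Fin n),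
      (((⊤ : SimpleGraph (Fin n)).adjMatrix ℕ) ^ (k + 1)) u v ≤ n ^ k := by
    have h1 : ∀ a b : Fin n, (⊤ : SimpleGraph (Fin n)).adjMatrix ℕ a b ≤ 1 := by
      intro a b
      rw [SimpleGraph.adjMatrix_apply]
      split_ifs <;> simp
    intro k
    induction k with
    | zero => intro u v; simpa using h1 u v
    | succ k ih =>
      intro u v
      rw [pow_succ, Matrix.mul_apply]
      calc _ ≤ ∑ _w : Fin n, n ^ k * 1 :=
            Finset.sum_le_sum fun w _ => Nat.mul_le_mul (ih u w) (h1 w v)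
        _ = n ^ (k + 1) := by simp [pow_succ, mul_comm]
  have h := key k u v
  rw [SimpleGraph.adjMatrix_pow_apply_eq_card_walk] at h
  simpa only [SimpleGraph.card_set_walk_length_eq, Nat.cast_id] using h

theorem sum_pow_succ_le {d : ℝ} (hd : 2 ≤ d) (r : ℕ) :
    ∑ k ∈ Finset.range r, d ^ (k + 1) ≤ 2 * d ^ r := by
  induction r with
  | zero => simp
  | succ r ih =>
    rw [Finset.sum_range_succ]
    have h : 0 ≤ d ^ r := by positivity
    nlinarith [pow_succ d r]

/-- For `2 ≤ d ≤ n`, `r ≥ 1` and fixed distinct vertices `u v`, the probability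
`p_r` that `G(n, d/n)` contains a path of length at most `r` between `u` and `v`
satisfies `d/n ≤ p_r ≤ 2 d^r / n`. -/
theorem path_of_length_at_most_r_prob_bounds
    (n : ℕ) (hn : 1 ≤ n) (d : ℝ) (hd2 : 2 ≤ d) (hdn : d ≤ n)
    (r : ℕ) (hr : 1 ≤ r) (u v : Fin n) (huv : u ≠ v) :
    ENNReal.ofReal (d / n)
      ≤ erdosRenyi n (Real.toNNReal (d / n))
          {ω | ∃ w : (graphOf ω).Walk u v, w.IsPath ∧ w.length ≤ r} ∧
    erdosRenyi n (Real.toNNReal (d / n))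
        {ω | ∃ w : (graphOf ω).Walk u v, w.IsPath ∧ w.length ≤ r}
      ≤ ENNReal.ofReal (2 * d ^ r / n) := by
  have hn0 : (0 : ℝ) < n := by exact_mod_cast hn
  have hp0 : 0 ≤ d / n := by positivity
  have hp1 : Real.toNNReal (d / n) ≤ 1 :=
    Real.toNNReal_le_one.2 ((div_le_one hn0).2 hdn)
  constructor
  · have h := erdosRenyi_forall_mem n hp1 {s(u, v)}
    rw [Finset.card_singleton, pow_one] at h
    change ((Real.toNNReal (d / n) : ℝ≥0) : ℝ≥0∞) ≤ _
    rw [← h]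
    refine measure_mono fun ω hω => ?_
    have hadj : (graphOf ω).Adj u v := by
      rw [graphOf, SimpleGraph.fromEdgeSet_adj]
      exact ⟨hω _ (Finset.mem_singleton_self _), huv⟩
    exact ⟨hadj.toWalk, SimpleGraph.Walk.IsPath.of_adj hadj, by simpa using hr⟩
  · classical
    -- `W k` is the set of paths of length `k + 1` from `u` to `v` in the complete graph.
    let W : ℕ → Finset ((⊤ : SimpleGraph (Fin n)).Walk u v) := fun k =>
      {w ∈ (⊤ : SimpleGraph (Fin n)).finsetWalkLength (k + 1) u v | w.IsPath}
    have hsub : {ω : Sym2 (Fin n) → Bool | ∃ w : (graphOf ω).Walk u v, w.IsPath ∧ w.length ≤ r}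
        ⊆ ⋃ k ∈ Finset.range r, ⋃ w ∈ W k, {ω | ∀ e ∈ w.edges.toFinset, ω e = true} := by
      rintro ω ⟨w, hw, hlen⟩
      have hpos : 0 < w.length := by
        by_contra! h
        exact huv (SimpleGraph.Walk.eq_of_length_eq_zero (Nat.le_zero.1 h))
      simp only [Set.mem_iUnion]
      refine ⟨w.length - 1, Finset.mem_range.2 (by omega), w.mapLe le_top, ?_, ?_⟩
      · refine Finset.mem_filter.2 ⟨?_, hw.mapLe le_top⟩
        rw [SimpleGraph.mem_finsetWalkLength_iff]
        simp only [SimpleGraph.Walk.mapLe, SimpleGraph.Walk.length_map]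
        omega
      · intro e he
        rw [List.mem_toFinset, SimpleGraph.Walk.edges_mapLe_eq_edges] at he
        have := w.edges_subset_edgeSet he
        rw [graphOf, SimpleGraph.edgeSet_fromEdgeSet] at this
        exact this.1
    have hprob : ∀ k, ∀ w ∈ W k,
        erdosRenyi n (Real.toNNReal (d / n)) {ω | ∀ e ∈ w.edges.toFinset, ω e = true}
          = ENNReal.ofReal ((d / n) ^ (k + 1)) := by
      intro k w hw
      obtain ⟨hw1, hw2⟩ := Finset.mem_filter.1 hw
      rw [SimpleGraph.mem_finsetWalkLength_iff] at hw1
      rw [erdosRenyi_forall_mem n hp1, List.toFinset_card_of_nodup hw2.isTrail.edges_nodup,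
        SimpleGraph.Walk.length_edges, hw1, ENNReal.ofReal_pow hp0]
      rfl
    calc _ ≤ ∑ k ∈ Finset.range r, ∑ w ∈ W k, erdosRenyi n (Real.toNNReal (d / n))
              {ω | ∀ e ∈ w.edges.toFinset, ω e = true} :=
          (measure_mono hsub).trans ((measure_biUnion_finset_le _ _).trans
            (Finset.sum_le_sum fun k _ => measure_biUnion_finset_le _ _))
      _ ≤ ∑ k ∈ Finset.range r, ENNReal.ofReal (d ^ (k + 1) / n) := by
          refine Finset.sum_le_sum fun k _ => ?_
          rw [Finset.sum_congr rfl (hprob k), Finset.sum_const, nsmul_eq_mul]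
          have hcard : (W k).card ≤ n ^ k :=
            (Finset.card_filter_le _ _).trans (card_finsetWalkLength_top_le n k u v)
          calc _ ≤ ((n ^ k : ℕ) : ℝ≥0∞) * ENNReal.ofReal ((d / n) ^ (k + 1)) := by gcongr
            _ = ENNReal.ofReal (d ^ (k + 1) / n) := by
              rw [← ENNReal.ofReal_natCast, ← ENNReal.ofReal_mul (by positivity)]
              congr 1
              push_cast
              rw [div_pow, pow_succ (n : ℝ)]
              field_simp
      _ = ENNReal.ofReal ((∑ k ∈ Finset.range r, d ^ (k + 1)) / n) := by
          rw [Finset.sum_div, ENNReal.ofReal_sum_of_nonneg fun k _ => by positivity]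
      _ ≤ _ := by
          gcongr
          exact sum_pow_succ_le hd2 r
end

section
/- For all integers n ≥ 1 and k with 1 ≤ k ≤ n, the inequality (n e / k)^k · (e k / (8 n))^{32 k} ≤ max( n^{-2k}, 2^{-n^{2/3}} ) holds; more precisely, the left-hand side is at most n^{-2k} when k ≤ n^{2/3}, and at most 2^{-n^{2/3}} when k > n^{2/3}. -/
/-!
Put `t = k / n ∈ (0, 1]`. Both factors are `k`-th powers, and the left-hand side equals
`(e ^ 33 / 8 ^ 32 * t ^ 31) ^ k`, where the constant `e ^ 33 / 8 ^ 32` is far below `1 / 2`.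
If `k ≤ n ^ (2/3)`, then `t ^ 3 ≤ 1 / n`, so `t ^ 31 ≤ t ^ 6 ≤ n ^ (-2)`, and the `k`-th power is
at most `n ^ (-2k)`. If `k > n ^ (2/3)`, the base is at most `1 / 2`, and the `k`-th power is at
most `2 ^ (-k) ≤ 2 ^ (-n ^ (2/3))`.
-/

lemma choice_times_chernoff_eq {n k : ℕ} (hn : 1 ≤ n) (hk : 1 ≤ k) :
    ((n : ℝ) * Real.exp 1 / k) ^ k * (Real.exp 1 * k / (8 * n)) ^ (32 * k)
      = (Real.exp 1 ^ 33 / 8 ^ 32 * ((k : ℝ) / n) ^ 31) ^ k := by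
  have hn0 : (n : ℝ) ≠ 0 := by positivity
  have hk0 : (k : ℝ) ≠ 0 := by positivity
  rw [pow_mul, ← mul_pow]
  congr 1
  field_simp

lemma exp_one_pow_div_le_half : Real.exp 1 ^ 33 / 8 ^ 32 ≤ 1 / 2 := by
  have h : Real.exp 1 ^ 33 ≤ 3 ^ 33 :=
    pow_le_pow_left₀ (Real.exp_pos 1).le (by linarith [Real.exp_one_lt_d9]) 33
  rw [div_le_iff₀ (by positivity)]
  exact h.trans (by norm_num)

lemma choice_times_chernoff_le_of_le {n k : ℕ} (hn : 1 ≤ n) (hk : 1 ≤ k) (hkn : k ≤ n)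
    (h : (k : ℝ) ≤ (n : ℝ) ^ ((2 : ℝ) / 3)) :
    ((n : ℝ) * Real.exp 1 / k) ^ k * (Real.exp 1 * k / (8 * n)) ^ (32 * k)
      ≤ (n : ℝ) ^ (-(2 * k : ℝ)) := by
  have hn0 : (0 : ℝ) < n := by positivity
  have ht0 : (0 : ℝ) ≤ (k : ℝ) / n := by positivity
  have ht1 : (k : ℝ) / n ≤ 1 := (div_le_one hn0).2 (by exact_mod_cast hkn)
  have hk3 : (k : ℝ) ^ 3 ≤ (n : ℝ) ^ 2 := by
    calc (k : ℝ) ^ 3 ≤ ((n : ℝ) ^ ((2 : ℝ) / 3)) ^ 3 := by gcongr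
      _ = (n : ℝ) ^ 2 := by
        rw [← Real.rpow_natCast, ← Real.rpow_mul hn0.le, ← Real.rpow_natCast]
        norm_num
  have ht3 : ((k : ℝ) / n) ^ 3 ≤ (n : ℝ)⁻¹ := by
    rw [div_pow, div_le_iff₀ (by positivity)]
    calc (k : ℝ) ^ 3 ≤ (n : ℝ) ^ 2 := hk3
      _ = (n : ℝ)⁻¹ * n ^ 3 := by field_simp
  have ht31 : ((k : ℝ) / n) ^ 31 ≤ ((n : ℝ) ^ 2)⁻¹ := by
    calc ((k : ℝ) / n) ^ 31 ≤ ((k : ℝ) / n) ^ 6 := pow_le_pow_of_le_one ht0 ht1 (by norm_num)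
      _ = (((k : ℝ) / n) ^ 3) ^ 2 := by rw [← pow_mul]
      _ ≤ ((n : ℝ)⁻¹) ^ 2 := by gcongr
      _ = ((n : ℝ) ^ 2)⁻¹ := inv_pow _ _
  have hrhs : (n : ℝ) ^ (-(2 * k : ℝ)) = (((n : ℝ) ^ 2)⁻¹) ^ k := by
    rw [Real.rpow_neg hn0.le, inv_pow, ← pow_mul, ← Real.rpow_natCast]
    push_cast
    rfl
  rw [choice_times_chernoff_eq hn hk, hrhs]
  gcongr
  calc Real.exp 1 ^ 33 / 8 ^ 32 * ((k : ℝ) / n) ^ 31 ≤ 1 * ((k : ℝ) / n) ^ 31 := by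
        gcongr
        linarith [exp_one_pow_div_le_half]
    _ ≤ ((n : ℝ) ^ 2)⁻¹ := by rwa [one_mul]

lemma choice_times_chernoff_le_of_lt {n k : ℕ} (hn : 1 ≤ n) (hk : 1 ≤ k) (hkn : k ≤ n)
    (h : (n : ℝ) ^ ((2 : ℝ) / 3) < (k : ℝ)) :
    ((n : ℝ) * Real.exp 1 / k) ^ k * (Real.exp 1 * k / (8 * n)) ^ (32 * k)
      ≤ (2 : ℝ) ^ (-((n : ℝ) ^ ((2 : ℝ) / 3))) := by
  have hn0 : (0 : ℝ) < n := by positivity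
  have ht0 : (0 : ℝ) ≤ (k : ℝ) / n := by positivity
  have ht1 : (k : ℝ) / n ≤ 1 := (div_le_one hn0).2 (by exact_mod_cast hkn)
  rw [choice_times_chernoff_eq hn hk]
  calc (Real.exp 1 ^ 33 / 8 ^ 32 * ((k : ℝ) / n) ^ 31) ^ k ≤ (1 / 2 * 1) ^ k := by
        refine pow_le_pow_left₀ (by positivity) ?_ k
        exact mul_le_mul exp_one_pow_div_le_half (pow_le_one₀ ht0 ht1) (by positivity)
          (by norm_num)
    _ = (2 : ℝ) ^ (-(k : ℝ)) := by
        rw [Real.rpow_neg zero_le_two, Real.rpow_natCast, mul_one, one_div, inv_pow]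
    _ ≤ (2 : ℝ) ^ (-((n : ℝ) ^ ((2 : ℝ) / 3))) :=
        Real.rpow_le_rpow_of_exponent_le one_le_two (neg_le_neg h.le)

/-- For `1 ≤ k ≤ n`, `(n e / k)^k (e k / (8 n))^(32 k)` is at most
`max (n^(-2k)) (2^(-n^(2/3)))`; more precisely it is at most `n^(-2k)`
when `k ≤ n^(2/3)` and at most `2^(-n^(2/3))` when `k > n^(2/3)`. -/
theorem nail_choice_times_chernoff_bound
    (n k : ℕ) (hn : 1 ≤ n) (hk1 : 1 ≤ k) (hkn : k ≤ n) :
    ((n : ℝ) * Real.exp 1 / k) ^ k * (Real.exp 1 * k / (8 * n)) ^ (32 * k)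
        ≤ max ((n : ℝ) ^ (-(2 * k : ℝ))) ((2 : ℝ) ^ (-((n : ℝ) ^ ((2 : ℝ) / 3)))) ∧
    ((k : ℝ) ≤ (n : ℝ) ^ ((2 : ℝ) / 3) →
      ((n : ℝ) * Real.exp 1 / k) ^ k * (Real.exp 1 * k / (8 * n)) ^ (32 * k)
        ≤ (n : ℝ) ^ (-(2 * k : ℝ))) ∧
    ((n : ℝ) ^ ((2 : ℝ) / 3) < (k : ℝ) →
      ((n : ℝ) * Real.exp 1 / k) ^ k * (Real.exp 1 * k / (8 * n)) ^ (32 * k)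
        ≤ (2 : ℝ) ^ (-((n : ℝ) ^ ((2 : ℝ) / 3)))) := by
  refine ⟨?_, choice_times_chernoff_le_of_le hn hk1 hkn, choice_times_chernoff_le_of_lt hn hk1 hkn⟩
  rcases le_or_gt (k : ℝ) ((n : ℝ) ^ ((2 : ℝ) / 3)) with h | h
  · exact (choice_times_chernoff_le_of_le hn hk1 hkn h).trans (le_max_left _ _)
  · exact (choice_times_chernoff_le_of_lt hn hk1 hkn h).trans (le_max_right _ _)
end

section
/- Let n ≥ 1 and k ≥ 1 and m ≥ 0 be integers, let d be a real number with 0 ≤ d ≤ n, and let S be a fixed set of k vertices of {1,…,n}. The probability that the subgraph of the Erdős–Rényi random graph G(n, d/n) induced on S has at least k + m edges is at most k^{2k+2m} (d/n)^{k+m}. -/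
/-!
A first-moment bound. Every edge of the induced graph is a pair in `S.sym2`, which has
`k (k + 1) / 2 ≤ k ^ 2` elements (loops included). If the induced graph has at least `k + m` edges,
then some `T ⊆ S.sym2` with `k + m` elements consists of pairs that are all present
(`exists_present_pairs`). For a fixed `T` this has probability `p ^ (k + m)` by independence
(`erdosRenyi_all_present`), and there are at most `(k ^ 2) ^ (k + m)` choices of `T`, so the union
bound finishes the proof.
-/

open MeasureTheory
open scoped NNReal ENNReal

/-- The hypothesis `p ≤ 1` is essential: for `p > 1` the subtraction `1 - p` truncates to `0` and
the total mass is `p`. -/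
theorem bernoulliMeasure_univ (p : ℝ≥0) (hp : p ≤ 1) : bernoulliMeasure p Set.univ = 1 := by
  simp only [bernoulliMeasure, Measure.add_apply, Measure.smul_apply, measure_univ,
    ENNReal.smul_def, smul_eq_mul, mul_one]
  rw [← ENNReal.coe_add, add_tsub_cancel_of_le hp, ENNReal.coe_one]

instance bernoulliMeasure_isFiniteMeasure (p : ℝ≥0) : IsFiniteMeasure (bernoulliMeasure p) := by
  unfold bernoulliMeasure
  infer_instance

theorem erdosRenyi_all_present (n : ℕ) (p : ℝ≥0) (hp : p ≤ 1) (T : Finset (Sym2 (Fin n))) :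
    erdosRenyi n p {ω | ∀ e ∈ T, ω e = true} = (p : ℝ≥0∞) ^ T.card := by
  classical
  have h : {ω : Sym2 (Fin n) → Bool | ∀ e ∈ T, ω e = true} =
      Set.univ.pi (fun e => if e ∈ T then {true} else Set.univ) := by
    ext ω
    simp only [Set.mem_ofPred_eq, Set.mem_pi, Set.mem_univ, true_implies]
    refine forall_congr' fun e => ?_
    by_cases he : e ∈ T <;> simp [he]
  rw [h, erdosRenyi, Measure.pi_pi]
  have h2 : ∀ e, bernoulliMeasure p (if e ∈ T then {true} else Set.univ) =
      if e ∈ T then (p : ℝ≥0∞) else 1 := by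
    intro e
    split_ifs
    · exact bernoulliMeasure_true p
    · exact bernoulliMeasure_univ p hp
  simp_rw [h2]
  rw [Finset.prod_ite_mem, Finset.univ_inter, Finset.prod_const]

/-- Deterministic half of the union bound: the edges of the induced graph inject into the pairs of
`S.sym2` that are present in `ω`. -/
theorem exists_present_pairs {n : ℕ} (S : Finset (Fin n)) (ω : Sym2 (Fin n) → Bool) (r : ℕ)
    (h : r ≤ ((graphOf ω).induce (S : Set (Fin n))).edgeSet.ncard) :
    ∃ T ∈ S.sym2.powersetCard r, ∀ e ∈ T, ω e = true := by
  classical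
  have hinj : Function.Injective (Sym2.map (Subtype.val : ↥(S : Set (Fin n)) → Fin n)) :=
    Sym2.map.injective Subtype.val_injective
  have hsub : Sym2.map (Subtype.val : ↥(S : Set (Fin n)) → Fin n) ''
      ((graphOf ω).induce (S : Set (Fin n))).edgeSet ⊆
      ((S.sym2.filter fun e => ω e = true : Finset (Sym2 (Fin n))) : Set (Sym2 (Fin n))) := by
    rintro _ ⟨e, he, rfl⟩
    induction e using Sym2.ind with
    | _ x y =>
      have hx : (x : Fin n) ∈ S := x.2
      have hy : (y : Fin n) ∈ S := y.2
      simp only [SimpleGraph.mem_edgeSet, SimpleGraph.comap_adj, graphOf,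
        SimpleGraph.fromEdgeSet_adj, Set.mem_ofPred_eq, Function.Embedding.subtype_apply] at he
      simp [hx, hy, he.1]
  have hcard := Set.ncard_le_ncard hsub (Finset.finite_toSet _)
  rw [Set.ncard_image_of_injective _ hinj, Set.ncard_coe_finset] at hcard
  obtain ⟨T, hT, hTc⟩ := Finset.exists_subset_card_eq (h.trans hcard)
  exact ⟨T, Finset.mem_powersetCard.2 ⟨hT.trans (Finset.filter_subset _ _), hTc⟩,
    fun e he => (Finset.mem_filter.1 (hT he)).2⟩

theorem card_powersetCard_sym2_le {α : Type*} [DecidableEq α] (S : Finset α) (r : ℕ) :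
    (S.sym2.powersetCard r).card ≤ S.card ^ (2 * r) := by
  rw [Finset.card_powersetCard, Finset.card_sym2, pow_mul]
  refine (Nat.choose_le_pow _ _).trans (Nat.pow_le_pow_left ?_ r)
  rw [Nat.choose_two_right, Nat.add_sub_cancel]
  apply Nat.div_le_of_le_mul
  nlinarith [Nat.le_mul_self S.card]

/-- For a fixed set `S` of `k` vertices, the probability that the subgraph of
`G(n, d/n)` induced on `S` has at least `k + m` edges is at most
`k^(2k+2m) (d/n)^(k+m)`. -/
theorem induced_subgraph_many_edges_prob_le
    (n k m : ℕ) (hn : 1 ≤ n) (hk : 1 ≤ k)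
    (d : ℝ) (hd0 : 0 ≤ d) (hdn : d ≤ n)
    (S : Finset (Fin n)) (hS : S.card = k) :
    erdosRenyi n (Real.toNNReal (d / n))
      {ω | k + m ≤ ((graphOf ω).induce (S : Set (Fin n))).edgeSet.ncard}
      ≤ ENNReal.ofReal ((k : ℝ) ^ (2 * k + 2 * m) * (d / n) ^ (k + m)) := by
  classical
  set p : ℝ≥0 := Real.toNNReal (d / n) with hpdef
  have hp : p ≤ 1 := by
    rw [hpdef, Real.toNNReal_le_one]
    exact div_le_one_of_le₀ hdn (Nat.cast_nonneg n)
  calc erdosRenyi n p {ω | k + m ≤ ((graphOf ω).induce (S : Set (Fin n))).edgeSet.ncard}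
      ≤ erdosRenyi n p (⋃ T ∈ S.sym2.powersetCard (k + m), {ω | ∀ e ∈ T, ω e = true}) := by
        refine measure_mono fun ω hω => ?_
        obtain ⟨T, hT, h⟩ := exists_present_pairs S ω (k + m) hω
        exact Set.mem_biUnion hT h
    _ ≤ ∑ T ∈ S.sym2.powersetCard (k + m), erdosRenyi n p {ω | ∀ e ∈ T, ω e = true} :=
        measure_biUnion_finset_le _ _
    _ = ∑ T ∈ S.sym2.powersetCard (k + m), (p : ℝ≥0∞) ^ (k + m) := by
        refine Finset.sum_congr rfl fun T hT => ?_
        rw [erdosRenyi_all_present n p hp, (Finset.mem_powersetCard.1 hT).2]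
    _ = ((S.sym2.powersetCard (k + m)).card : ℝ≥0∞) * (p : ℝ≥0∞) ^ (k + m) := by
        rw [Finset.sum_const, nsmul_eq_mul]
    _ ≤ ((k ^ (2 * k + 2 * m) : ℕ) : ℝ≥0∞) * (p : ℝ≥0∞) ^ (k + m) := by
        gcongr
        have h := card_powersetCard_sym2_le S (k + m)
        rwa [hS, mul_add] at h
    _ = ENNReal.ofReal ((k : ℝ) ^ (2 * k + 2 * m) * (d / n) ^ (k + m)) := by
        rw [ENNReal.ofReal_mul (by positivity), ENNReal.ofReal_pow (by positivity),
          ENNReal.ofReal_pow (by positivity), ENNReal.ofReal_natCast, Nat.cast_pow]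
        rfl
end

section
/- Let G be a finite simple graph, v a vertex of G, and r ≥ 1, m ≥ 0 integers. Let B = N_r(v) be the set of vertices at distance at most r from v. If the subgraph of G induced on B has at least |B| + m edges, then G contains a subgraph H with at most 2r(m+1) + 1 vertices and at least |V(H)| + m edges. -/
/-!
Fix a breadth-first spanning tree of the ball `B` rooted at `v`, encoded by a parent map `p` with
`p v = v`. It has at most `|B| - 1` edges, so at least `m + 1` edges inside `B` lie outside it;
let `F` be a set of exactly `m + 1` of them. Let `S` consist of `v` and of the first `r` vertices
on the tree path from each endpoint of an edge of `F` to the root, so `|S| ≤ 2r(m+1) + 1`. The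
set `S` is closed under `p`, because the `r`-th iterate of `p` sends all of `B` to `v`. Hence the
subgraph induced on `S` contains the `|S| - 1` tree edges `{u, p u}` with `u ∈ S \ {v}`, together
with the `m + 1` further edges of `F`.
-/

/-- The `r`-neighborhood of `v` in `G`: all vertices reachable from `v` by a
walk of length at most `r` (this includes `v` itself). -/
def neighborhoodBall {V : Type*} (G : SimpleGraph V) (v : V) (r : ℕ) : Set V :=
  {u | ∃ w : G.Walk v u, w.length ≤ r}

/-- Every vertex of the ball other than the centre has a neighbour in the ball that is closer to
the centre. -/
lemma exists_parent {V : Type*} (G : SimpleGraph V) (v : V) (r : ℕ) {u : V}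
    (hu : u ∈ neighborhoodBall G v r) (huv : u ≠ v) :
    ∃ q, G.Adj u q ∧ G.dist v q < G.dist v u ∧ q ∈ neighborhoodBall G v r := by
  obtain ⟨w, hw⟩ := hu
  obtain ⟨w', hw'⟩ := w.reachable.symm.exists_walk_length_eq_dist
  rw [SimpleGraph.dist_comm] at hw'
  have h1 := SimpleGraph.dist_le w
  cases w' with
  | nil => exact absurd rfl huv
  | @cons _ q _ h t =>
    have h2 := SimpleGraph.dist_le t.reverse
    simp only [SimpleGraph.Walk.length_cons, SimpleGraph.Walk.length_reverse] at hw' h2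
    exact ⟨q, h, by omega, t.reverse, by rw [SimpleGraph.Walk.length_reverse]; omega⟩

/-- If the subgraph induced on the `r`-neighborhood `B = N_r(v)` of some vertex
`v` has at least `|B| + m` edges, then `G` contains a subgraph `H` with at most
`2r(m+1) + 1` vertices and at least `|V(H)| + m` edges. -/
theorem dense_ball_gives_small_dense_subgraph
    {V : Type*} [Fintype V] (G : SimpleGraph V) (v : V) (r m : ℕ) (hr : 1 ≤ r)
    (hdense : (neighborhoodBall G v r).ncard + m
      ≤ (G.induce (neighborhoodBall G v r)).edgeSet.ncard) :
    ∃ H : G.Subgraph,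
      H.verts.ncard ≤ 2 * r * (m + 1) + 1 ∧
      H.verts.ncard + m ≤ H.edgeSet.ncard := by
  classical
  set B := neighborhoodBall G v r with hB
  have hvB : v ∈ B := ⟨SimpleGraph.Walk.nil, Nat.zero_le _⟩
  have hex : ∀ u, ∃ q, (u = v → q = v) ∧
      (u ∈ B → u ≠ v → G.Adj u q ∧ G.dist v q < G.dist v u ∧ q ∈ B) := by
    intro u
    by_cases h : u ∈ B ∧ u ≠ v
    · obtain ⟨q, hq⟩ := exists_parent G v r h.1 h.2
      exact ⟨q, fun h' => absurd h' h.2, fun _ _ => hq⟩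
    · exact ⟨v, fun _ => rfl, fun h1 h2 => absurd ⟨h1, h2⟩ h⟩
  choose p hpv hp using hex
  have hiter : ∀ u ∈ B, ∀ i, p^[i] u ∈ B ∧ (p^[i] u = v ∨ G.dist v (p^[i] u) + i ≤ r) := by
    intro u hu i
    induction i with
    | zero =>
      obtain ⟨w, hw⟩ := hu
      exact ⟨⟨w, hw⟩, Or.inr ((SimpleGraph.dist_le w).trans hw)⟩
    | succ i ih =>
      rw [Function.iterate_succ_apply']
      by_cases h : p^[i] u = v
      · rw [hpv _ h]
        exact ⟨hvB, Or.inl rfl⟩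
      · obtain ⟨-, h2, h3⟩ := hp _ ih.1 h
        have := ih.2.resolve_left h
        exact ⟨h3, Or.inr (by omega)⟩
  have hroot : ∀ u ∈ B, p^[r] u = v := by
    intro u hu
    obtain ⟨⟨w, -⟩, h | h⟩ := hiter u hu r
    · exact h
    · exact ((w.reachable.dist_eq_zero_iff).1 (by omega)).symm
  have hinj : Set.InjOn (fun u => s(u, p u)) (B \ {v}) := by
    rintro a ⟨ha, hav⟩ b ⟨hb, hbv⟩ hab
    have h1 := (hp a ha hav).2.1
    have h2 := (hp b hb hbv).2.1
    rcases Sym2.eq_iff.1 hab with h | ⟨h, h'⟩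
    · exact h.1
    · rw [h'] at h1
      rw [← h] at h2
      omega
  -- edges inside the ball, as a set of unordered pairs of `V`
  set E : Set (Sym2 V) := {e | e ∈ G.edgeSet ∧ ∀ x ∈ e, x ∈ B} with hE
  have hEcard : B.ncard + m ≤ E.ncard := by
    refine hdense.trans ?_
    rw [← Set.ncard_image_of_injective _ (Sym2.map.injective Subtype.val_injective)]
    refine Set.ncard_le_ncard ?_ (Set.toFinite _)
    rintro _ ⟨e, he, rfl⟩
    induction e with
    | _ a b =>
      refine ⟨he, ?_⟩
      intro x hx
      rcases Sym2.mem_iff.1 hx with rfl | rfl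
      exacts [a.2, b.2]
  set T : Set (Sym2 V) := (fun u => s(u, p u)) '' (B \ {v}) with hT
  have hTcard : T.ncard + 1 ≤ B.ncard := by
    have h1 := Set.ncard_image_le (f := fun u => s(u, p u)) (Set.toFinite (B \ {v}))
    have h2 := Set.ncard_sdiff_singleton_add_one hvB (Set.toFinite _)
    rw [hT]; omega
  have hdiff : m + 1 ≤ (E \ T).ncard := by
    have := Set.le_ncard_sdiff T E (Set.toFinite _)
    omega
  obtain ⟨F, hFsub, hFcard⟩ := Set.exists_subset_card_eq hdiff
  set A : Finset V := F.toFinite.toFinset.biUnion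
    (fun e => e.toFinset.biUnion fun u => (Finset.range r).image fun i => p^[i] u) with hA
  have hAmem : ∀ x, x ∈ A ↔ ∃ e ∈ F, ∃ u ∈ e, ∃ i < r, p^[i] u = x := by
    intro x
    simp [hA]
  have hAcard : A.card ≤ (m + 1) * (2 * r) := by
    rw [← hFcard, Set.ncard_eq_toFinset_card F F.toFinite]
    refine Finset.card_biUnion_le_card_mul _ _ _ fun e _ => ?_
    refine (Finset.card_biUnion_le_card_mul _ _ r fun u _ => ?_).trans
      (Nat.mul_le_mul_right r ?_)
    · exact Finset.card_image_le.trans (Finset.card_range r).le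
    · rw [Sym2.card_toFinset]
      split_ifs <;> omega
  set S : Finset V := insert v A with hS
  have hFB : ∀ e ∈ F, ∀ u ∈ e, u ∈ B := fun e he u hu => (hFsub he).1.2 u hu
  have hSB : ∀ x ∈ S, x ∈ B := by
    intro x hx
    rcases Finset.mem_insert.1 hx with rfl | hx
    · exact hvB
    · obtain ⟨e, he, u, hu, i, -, rfl⟩ := (hAmem x).1 hx
      exact (hiter u (hFB e he u hu) i).1
  have hSp : ∀ x ∈ S, p x ∈ S := by
    intro x hx
    rcases Finset.mem_insert.1 hx with h | hx
    · rw [hpv x h]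
      exact Finset.mem_insert_self _ _
    · obtain ⟨e, he, u, hu, i, hi, rfl⟩ := (hAmem x).1 hx
      rw [← Function.iterate_succ_apply' p i u]
      rcases Nat.lt_or_ge (i + 1) r with h | h
      · exact Finset.mem_insert_of_mem ((hAmem _).2 ⟨e, he, u, hu, i + 1, h, rfl⟩)
      · have : i + 1 = r := by omega
        rw [Nat.succ_eq_add_one, this, hroot u (hFB e he u hu)]
        exact Finset.mem_insert_self _ _
  -- `hr` enters here: an endpoint itself is the iterate with index `0 < r`
  have hFS : ∀ e ∈ F, ∀ u ∈ e, u ∈ S := fun e he u hu =>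
    Finset.mem_insert_of_mem ((hAmem u).2 ⟨e, he, u, hu, 0, hr, rfl⟩)
  refine ⟨(⊤ : G.Subgraph).induce S, ?_, ?_⟩
  · rw [SimpleGraph.Subgraph.induce_verts, Set.ncard_coe_finset]
    have := Finset.card_insert_le v A
    calc S.card ≤ A.card + 1 := this
      _ ≤ (m + 1) * (2 * r) + 1 := by omega
      _ = 2 * r * (m + 1) + 1 := by ring
  · rw [SimpleGraph.Subgraph.induce_verts]
    have hvS : v ∈ (S : Set V) := Finset.mem_insert_self _ _
    set TS : Set (Sym2 V) := (fun u => s(u, p u)) '' ((S : Set V) \ {v}) with hTS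
    have hsub : (S : Set V) \ {v} ⊆ B \ {v} := fun x hx => ⟨hSB x hx.1, hx.2⟩
    have hTScard : TS.ncard + 1 = (S : Set V).ncard := by
      rw [hTS, (hinj.mono hsub).ncard_image]
      exact Set.ncard_sdiff_singleton_add_one hvS (Set.toFinite _)
    have hdisj : Disjoint TS F :=
      Set.disjoint_left.2 fun e he heF => (hFsub heF).2 (Set.image_mono hsub he)
    have hunion := Set.ncard_union_eq hdisj (Set.toFinite _) (Set.toFinite _)
    have hle : TS ∪ F ⊆ ((⊤ : G.Subgraph).induce S).edgeSet := by
      rintro e (⟨x, hx, rfl⟩ | he)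
      · exact ⟨hx.1, hSp x hx.1, (hp x (hSB x hx.1) hx.2).1⟩
      · have h1 := hFS e he
        have h2 := (hFsub he).1.1
        induction e with
        | _ a b => exact ⟨h1 a (Sym2.mem_mk_left a b), h1 b (Sym2.mem_mk_right a b), h2⟩
    have := Set.ncard_le_ncard hle (Set.toFinite _)
    omega
end

section
/- There exists a function f : ℕ × ℕ → ℝ (independent of n and d) with the following property. For all integers n ≥ 1, r ≥ 1, m ≥ 1 and every real d with 1 ≤ d ≤ n, the probability that the Erdős–Rényi random graph G(n, d/n) contains a vertex v such that the subgraph induced on the r-neighborhood N_r(v) has at least |N_r(v)| + m edges is at most f(r,m) · d^{2r(m+1)+m+1} / n^m. -/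
/-!
The event forces a dense subgraph of bounded size. Let `B = N_r(v)` and let `π` send each vertex of
`B` other than `v` to a neighbor closer to `v`. The edges `{u, π u}` number at most `|B| - 1`, so if
`B` spans at least `|B| + m` edges, then `m + 1` of them are not of this form. Following `π` from the
at most `2(m+1)` endpoints of these extra edges reaches `v` in at most `r` steps, so the vertices
visited form a set `S` with `|S| ≤ 2r(m+1) + 1`. Since `S` is closed under `π`, it spans the
`|S| - 1` edges `{u, π u}` together with the `m + 1` extra ones, `|S| + m` in total
(`exists_small_dense`).

A union bound over `S` of size `k ≤ K = 2r(m+1) + 1` and over sets of `k + m` edges in `S` then bounds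
the probability by `∑ k ≤ K, n^k 2^(k+1 choose 2) (d/n)^(k+m)`, and `d ≥ 1` gives
`n^k (d/n)^(k+m) = d^(k+m) / n^m ≤ d^(K+m) / n^m`.
-/

open MeasureTheory
open scoped NNReal ENNReal

lemma exists_closer_neighbor {V : Type*} (G : SimpleGraph V) (v u : V) (r : ℕ)
    (hu : u ∈ neighborhoodBall G v r) (huv : u ≠ v) :
    ∃ w, G.Adj u w ∧ G.dist v w < G.dist v u ∧ w ∈ neighborhoodBall G v r := by
  obtain ⟨p, hp⟩ := hu
  obtain ⟨q, hq⟩ := p.reachable.symm.exists_walk_length_eq_dist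
  cases q with
  | nil => exact absurd rfl huv
  | @cons _ w _ h q =>
    rw [SimpleGraph.Walk.length_cons, SimpleGraph.dist_comm] at hq
    have h1 := SimpleGraph.dist_le q.reverse
    have h2 := SimpleGraph.dist_le p
    rw [SimpleGraph.Walk.length_reverse] at h1
    refine ⟨w, h, by omega, q.reverse, ?_⟩
    rw [SimpleGraph.Walk.length_reverse]
    omega

/-- A ball of radius `r` with excess at least `m` contains a vertex set of size at most
`2r(m+1) + 1` which spans at least `m` more edges than it has vertices. -/
lemma exists_small_dense {V : Type*} [Fintype V] [DecidableEq V] (G : SimpleGraph V) (v : V)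
    (r m : ℕ) (hr : 1 ≤ r)
    (h : (neighborhoodBall G v r).ncard + m ≤
      (G.induce (neighborhoodBall G v r)).edgeSet.ncard) :
    ∃ S : Finset V, S.card ≤ 2 * r * (m + 1) + 1 ∧
      ∃ F ⊆ S.sym2, F.card = S.card + m ∧ ∀ e ∈ F, e ∈ G.edgeSet := by
  classical
  set B := neighborhoodBall G v r with hB
  have hvB : v ∈ B := ⟨.nil, by simp⟩
  obtain ⟨E, hEcard, hE⟩ : ∃ E : Finset (Sym2 V), E.card = (G.induce B).edgeSet.ncard ∧
      ∀ e ∈ E, e ∈ G.edgeSet ∧ ∀ x ∈ e, x ∈ B := by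
    refine ⟨(Sym2.map Subtype.val '' (G.induce B).edgeSet).toFinset, ?_, ?_⟩
    · rw [← Set.ncard_eq_toFinset_card',
        Set.ncard_image_of_injective _ (Sym2.map.injective Subtype.val_injective)]
    · intro e he
      rw [Set.mem_toFinset] at he
      obtain ⟨e', he', rfl⟩ := he
      induction e' with
      | _ a b =>
        refine ⟨by simpa using he', ?_⟩
        intro x hx
        rw [Sym2.map_mk, Sym2.mem_iff] at hx
        rcases hx with rfl | rfl
        · exact a.2
        · exact b.2
  have hex : ∀ u, ∃ w, (u ∈ B → u ≠ v → G.Adj u w ∧ G.dist v w < G.dist v u ∧ w ∈ B) ∧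
      (u = v → w = v) := by
    intro u
    by_cases huv : u = v
    · exact ⟨v, fun _ h => absurd huv h, fun _ => rfl⟩
    · by_cases hu : u ∈ B
      · obtain ⟨w, hw⟩ := exists_closer_neighbor G v u r hu huv
        exact ⟨w, fun _ _ => hw, fun h => absurd h huv⟩
      · exact ⟨v, fun h => absurd h hu, fun h => absurd h huv⟩
  choose π hπ hπv using hex
  have hπB : ∀ u ∈ B, π u ∈ B := by
    intro u hu
    by_cases huv : u = v
    · rw [hπv u huv]; exact hvB
    · exact (hπ u hu huv).2.2
  have hiterB : ∀ i : ℕ, ∀ u ∈ B, π^[i] u ∈ B := by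
    intro i
    induction i with
    | zero => exact fun u hu => hu
    | succ i ih => exact fun u hu => ih _ (hπB u hu)
  have hiter : ∀ j : ℕ, ∀ u ∈ B, G.dist v u ≤ j → π^[j] u = v := by
    intro j
    induction j with
    | zero =>
      intro u hu hd
      obtain ⟨p, -⟩ := hu
      exact (p.reachable.dist_eq_zero_iff.1 (Nat.le_zero.1 hd)).symm
    | succ j ih =>
      intro u hu hd
      rw [Function.iterate_succ_apply]
      by_cases huv : u = v
      · rw [hπv u huv]
        exact ih v hvB (by simp)
      · have := hπ u hu huv
        exact ih _ this.2.2 (by omega)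
  -- The parent edges over the whole ball leave room for `m + 1` further edges.
  set T : Finset (Sym2 V) := (B.toFinset.erase v).image (fun u => s(u, π u)) with hT
  have hTcard : T.card + 1 ≤ B.ncard := by
    have h1 : T.card ≤ (B.toFinset.erase v).card := Finset.card_image_le
    have h2 : (B.toFinset.erase v).card + 1 = B.toFinset.card :=
      Finset.card_erase_add_one (by simpa using hvB)
    rw [Set.ncard_eq_toFinset_card']
    omega
  obtain ⟨X, hXsub, hXcard⟩ : ∃ X ⊆ E \ T, X.card = m + 1 := by
    apply Finset.exists_subset_card_eq
    have := Finset.le_card_sdiff T E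
    omega
  set P : Finset V := X.biUnion (fun e => e.toFinset) with hP
  have hPcard : P.card ≤ (m + 1) * 2 := by
    rw [← hXcard]
    apply Finset.card_biUnion_le_card_mul
    intro e _
    rw [Sym2.card_toFinset]
    split_ifs <;> omega
  have hPB : ∀ u ∈ P, u ∈ B := by
    intro u hu
    rw [hP, Finset.mem_biUnion] at hu
    obtain ⟨e, he, hue⟩ := hu
    exact (hE e (Finset.mem_sdiff.1 (hXsub he)).1).2 u (by simpa using hue)
  set S : Finset V :=
    insert v ((P ×ˢ Finset.range r).image (fun x => π^[x.2] x.1)) with hS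
  have hvS : v ∈ S := Finset.mem_insert_self _ _
  have hPS : ∀ u ∈ P, ∀ i < r, π^[i] u ∈ S := by
    intro u hu i hi
    apply Finset.mem_insert_of_mem
    exact Finset.mem_image.2 ⟨(u, i), by simp [hu, hi], rfl⟩
  have hScase : ∀ x ∈ S, x = v ∨ ∃ u ∈ P, ∃ i < r, π^[i] u = x := by
    intro x hx
    rcases Finset.mem_insert.1 hx with h | h
    · exact Or.inl h
    · obtain ⟨⟨u, i⟩, hui, rfl⟩ := Finset.mem_image.1 h
      rw [Finset.mem_product, Finset.mem_range] at hui
      exact Or.inr ⟨u, hui.1, i, hui.2, rfl⟩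
  have hSB : ∀ x ∈ S, x ∈ B := by
    intro x hx
    rcases hScase x hx with rfl | ⟨u, hu, i, -, rfl⟩
    · exact hvB
    · exact hiterB i u (hPB u hu)
  have hSπ : ∀ x ∈ S, π x ∈ S := by
    intro x hx
    rcases hScase x hx with h | ⟨u, hu, i, hi, rfl⟩
    · rw [hπv x h]; exact hvS
    · rw [← Function.iterate_succ_apply' π i u]
      rcases Nat.lt_or_ge (i + 1) r with h' | h'
      · exact hPS u hu _ h'
      · rw [hiter (i + 1) u (hPB u hu) ?_]
        · exact hvS
        · obtain ⟨p, hp⟩ := hPB u hu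
          exact (SimpleGraph.dist_le p).trans (hp.trans h')
  set T' : Finset (Sym2 V) := (S.erase v).image (fun u => s(u, π u)) with hT'
  have hT'T : T' ⊆ T := by
    apply Finset.image_subset_image
    apply Finset.erase_subset_erase
    intro x hx
    simpa using hSB x hx
  have hT'card : T'.card + 1 = S.card := by
    rw [hT', Finset.card_image_of_injOn, Finset.card_erase_add_one hvS]
    intro a ha b hb hab
    simp only [Finset.coe_erase, Set.mem_sdiff, Finset.mem_coe, Set.mem_singleton_iff] at ha hb
    have h1 := (hπ a (hSB a ha.1) ha.2).2.1
    have h2 := (hπ b (hSB b hb.1) hb.2).2.1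
    rcases Sym2.eq_iff.1 hab with h | ⟨h3, h4⟩
    · exact h.1
    -- The other case has `a = π b` and `b = π a`: each would be closer to `v` than the other.
    · rw [h4] at h1
      rw [← h3] at h2
      omega
  have hdisj : Disjoint X T' := by
    rw [Finset.disjoint_left]
    intro e he he'
    exact (Finset.mem_sdiff.1 (hXsub he)).2 (hT'T he')
  refine ⟨S, ?_, X ∪ T', ?_, ?_, ?_⟩
  · have h1 : S.card ≤ P.card * r + 1 := by
      refine (Finset.card_insert_le _ _).trans ?_
      have := Finset.card_image_le (s := P ×ˢ Finset.range r) (f := fun x => π^[x.2] x.1)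
      rw [Finset.card_product, Finset.card_range] at this
      omega
    have h2 : P.card * r ≤ (m + 1) * 2 * r := Nat.mul_le_mul_right r hPcard
    calc S.card ≤ (m + 1) * 2 * r + 1 := by omega
      _ = _ := by ring
  · intro e he
    rw [Finset.mem_sym2_iff]
    intro x hx
    rcases Finset.mem_union.1 he with he | he
    · exact hPS x (Finset.mem_biUnion.2 ⟨e, he, by simpa using hx⟩) 0 hr
    · obtain ⟨u, hu, rfl⟩ := Finset.mem_image.1 he
      have huS := Finset.mem_of_mem_erase hu
      rcases Sym2.mem_iff.1 hx with rfl | rfl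
      · exact huS
      · exact hSπ u huS
  · rw [Finset.card_union_of_disjoint hdisj]
    omega
  · intro e he
    rcases Finset.mem_union.1 he with he | he
    · exact (hE e (Finset.mem_sdiff.1 (hXsub he)).1).1
    · obtain ⟨u, hu, rfl⟩ := Finset.mem_image.1 he
      exact (hπ u (hSB u (Finset.mem_of_mem_erase hu)) (Finset.ne_of_mem_erase hu)).1

lemma erdosRenyi_all_present_le (n : ℕ) (p : ℝ≥0) (hp : p ≤ 1) (F : Finset (Sym2 (Fin n))) :
    erdosRenyi n p {ω | ∀ e ∈ F, ω e = true} ≤ (p : ℝ≥0∞) ^ F.card := by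
  classical
  have : IsFiniteMeasure (bernoulliMeasure p) := by
    unfold bernoulliMeasure; infer_instance
  have hset : {ω : Sym2 (Fin n) → Bool | ∀ e ∈ F, ω e = true} =
      Set.pi Set.univ (fun e => if e ∈ F then {true} else Set.univ) := by
    ext ω
    simp only [Set.mem_ofPred_eq, Set.mem_pi, Set.mem_univ, forall_true_left]
    refine forall_congr' fun e => ?_
    by_cases he : e ∈ F <;> simp [he]
  have h1 : bernoulliMeasure p {true} = p := by
    simp [bernoulliMeasure, -Measure.coe_nnreal_smul, ENNReal.smul_def]
  have h2 : bernoulliMeasure p Set.univ = 1 := by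
    have : (p : ℝ≥0∞) + ((1 - p : ℝ≥0) : ℝ≥0∞) = 1 := by
      rw [← ENNReal.coe_add, add_tsub_cancel_of_le hp, ENNReal.coe_one]
    simpa [bernoulliMeasure, -Measure.coe_nnreal_smul, Measure.smul_apply, ENNReal.smul_def]
      using this
  rw [hset, erdosRenyi, Measure.pi_pi]
  have : ∀ e, bernoulliMeasure p (if e ∈ F then {true} else Set.univ) =
      if e ∈ F then (p : ℝ≥0∞) else 1 := by
    intro e
    split_ifs
    · exact h1
    · exact h2
  simp_rw [this]
  simp

/-- There is a function `f` (independent of `n` and `d`) such that for all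
`n ≥ 1`, `r, m ≥ 1` and `1 ≤ d ≤ n`, the probability that `G(n, d/n)` has a
vertex whose induced `r`-neighborhood subgraph has at least `m` more edges than
vertices is at most `f(r,m) d^(2r(m+1)+m+1) / n^m`. -/
theorem dense_neighborhood_prob_le :
    ∃ f : ℕ × ℕ → ℝ,
      ∀ (n r m : ℕ), 1 ≤ n → 1 ≤ r → 1 ≤ m →
      ∀ d : ℝ, 1 ≤ d → d ≤ n →
        erdosRenyi n (Real.toNNReal (d / n))
          {ω | ∃ v : Fin n,
            (neighborhoodBall (graphOf ω) v r).ncard + m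
              ≤ ((graphOf ω).induce (neighborhoodBall (graphOf ω) v r)).edgeSet.ncard}
          ≤ ENNReal.ofReal
              (f (r, m) * d ^ (2 * r * (m + 1) + m + 1) / (n : ℝ) ^ m) := by
  refine ⟨fun x => ∑ k ∈ Finset.range (2 * x.1 * (x.2 + 1) + 2), (2 : ℝ) ^ ((k + 1).choose 2), ?_⟩
  intro n r m hn hr _ d hd hdn
  have hn0 : (0 : ℝ) < n := by exact_mod_cast hn
  set p := Real.toNNReal (d / n) with hp
  have hp1 : p ≤ 1 := by
    rw [hp, Real.toNNReal_le_one, div_le_one hn0]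
    exact hdn
  have hpc : (p : ℝ) = d / n := Real.coe_toNNReal _ (by positivity)
  have hsub : {ω : Sym2 (Fin n) → Bool | ∃ v : Fin n,
        (neighborhoodBall (graphOf ω) v r).ncard + m
          ≤ ((graphOf ω).induce (neighborhoodBall (graphOf ω) v r)).edgeSet.ncard} ⊆
      ⋃ k ∈ Finset.range (2 * r * (m + 1) + 2),
        ⋃ S ∈ Finset.powersetCard k (Finset.univ : Finset (Fin n)),
          ⋃ F ∈ Finset.powersetCard (k + m) S.sym2, {ω | ∀ e ∈ F, ω e = true} := by
    rintro ω ⟨v, hv⟩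
    obtain ⟨S, hS, F, hFS, hF, hFe⟩ := exists_small_dense (graphOf ω) v r m hr hv
    simp only [Set.mem_iUnion]
    refine ⟨S.card, Finset.mem_range.2 (by omega), S,
      Finset.mem_powersetCard.2 ⟨Finset.subset_univ _, rfl⟩, F,
      Finset.mem_powersetCard.2 ⟨hFS, hF⟩, ?_⟩
    intro e he
    have := hFe e he
    rw [graphOf, SimpleGraph.edgeSet_fromEdgeSet] at this
    exact this.1
  refine (measure_mono hsub).trans ?_
  refine (measure_biUnion_finset_le _ _).trans ?_
  rw [Finset.sum_mul, Finset.sum_div, ENNReal.ofReal_sum_of_nonneg (fun k _ => by positivity)]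
  refine Finset.sum_le_sum fun k hk => ?_
  have hkK : k ≤ 2 * r * (m + 1) + 1 := by
    have := Finset.mem_range.1 hk
    omega
  have hS : ∀ S ∈ Finset.powersetCard k (Finset.univ : Finset (Fin n)),
      erdosRenyi n p (⋃ F ∈ Finset.powersetCard (k + m) S.sym2, {ω | ∀ e ∈ F, ω e = true}) ≤
        ((2 ^ ((k + 1).choose 2) : ℕ) : ℝ≥0∞) * (p : ℝ≥0∞) ^ (k + m) := by
    intro S hS
    have hcard : (Finset.powersetCard (k + m) S.sym2).card ≤ 2 ^ ((k + 1).choose 2) := by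
      rw [Finset.card_powersetCard, Finset.card_sym2, (Finset.mem_powersetCard.1 hS).2]
      exact Nat.choose_le_two_pow _ _
    calc _ ≤ ∑ F ∈ Finset.powersetCard (k + m) S.sym2,
          erdosRenyi n p {ω | ∀ e ∈ F, ω e = true} := measure_biUnion_finset_le _ _
      _ ≤ ∑ F ∈ Finset.powersetCard (k + m) S.sym2, (p : ℝ≥0∞) ^ (k + m) := by
        refine Finset.sum_le_sum fun F hF => ?_
        rw [← (Finset.mem_powersetCard.1 hF).2]
        exact erdosRenyi_all_present_le n p hp1 F
      _ ≤ _ := by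
        rw [Finset.sum_const, nsmul_eq_mul]
        gcongr
  have hchoose : (Finset.powersetCard k (Finset.univ : Finset (Fin n))).card ≤ n ^ k := by
    rw [Finset.card_powersetCard, Finset.card_univ, Fintype.card_fin]
    exact Nat.choose_le_pow n k
  calc _ ≤ ∑ S ∈ Finset.powersetCard k (Finset.univ : Finset (Fin n)),
        ((2 ^ ((k + 1).choose 2) : ℕ) : ℝ≥0∞) * (p : ℝ≥0∞) ^ (k + m) :=
      (measure_biUnion_finset_le _ _).trans (Finset.sum_le_sum hS)
    _ ≤ ((n ^ k : ℕ) : ℝ≥0∞) *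
        (((2 ^ ((k + 1).choose 2) : ℕ) : ℝ≥0∞) * (p : ℝ≥0∞) ^ (k + m)) := by
      rw [Finset.sum_const, nsmul_eq_mul]
      gcongr
    _ = ENNReal.ofReal ((n : ℝ) ^ k * (2 ^ ((k + 1).choose 2) * (d / n) ^ (k + m))) := by
      have : (n : ℝ) ^ k * (2 ^ ((k + 1).choose 2) * (d / n) ^ (k + m)) =
          (((n : ℝ≥0) ^ k * (2 ^ ((k + 1).choose 2) * p ^ (k + m)) : ℝ≥0) : ℝ) := by
        push_cast
        rw [hpc]
      rw [this, ENNReal.ofReal_coe_nnreal]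
      push_cast
      rfl
    _ ≤ _ := by
      apply ENNReal.ofReal_le_ofReal
      have h1 : (n : ℝ) ^ k * (2 ^ ((k + 1).choose 2) * (d / n) ^ (k + m)) =
          2 ^ ((k + 1).choose 2) * d ^ (k + m) / (n : ℝ) ^ m := by
        rw [div_pow, pow_add (n : ℝ)]
        field_simp
      rw [h1]
      have h2 : d ^ (k + m) ≤ d ^ (2 * r * (m + 1) + m + 1) :=
        pow_le_pow_right₀ hd (by omega)
      gcongr
end

section
/- Let n ≥ 32 be an integer and let d be a real number with 1 ≤ d ≤ n. The probability that the maximum degree of the Erdős–Rényi random graph G(n, d/n) is at least (log n)^2 · d is at most n^{1 - (log n)/4}. -/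
/-!
The proof is a Chernoff bound at each vertex followed by a union bound over the `n` vertices.

For a fixed vertex `v`, the degree of `v` is at most the number of present edges among the pairs
`s(v, w)`, of which there are at most `n` (`degree_le_card`). These indicators are independent, so
with exponential base `2` the moment `E[2 ^ deg v]` is at most `(1 + p) ^ n ≤ exp (n p) = exp d`
(`integral_twoPow_starAt_le`), and Markov's inequality gives
`P(deg v ≥ x) ≤ exp (n p - x log 2)` (`degree_tail_le`). At `x = L² d`, where `L = log n ≥ 2`, the
exponent is `d (1 - L² log 2) ≤ -L² / 4`, and the union bound yields
`n * exp (-L² / 4) = n ^ (1 - L / 4)`.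
-/

open MeasureTheory
open scoped NNReal ENNReal

/-- The pairs containing `v`, the loop `s(v, v)` included; the loop only weakens the upper bound. -/
def starAt {n : ℕ} (v : Fin n) : Finset (Sym2 (Fin n)) :=
  Finset.univ.image fun w => s(v, w)

lemma card_starAt_le {n : ℕ} (v : Fin n) : (starAt v).card ≤ n := by
  simpa [starAt] using Finset.card_image_le (s := (Finset.univ : Finset (Fin n)))
    (f := fun w => s(v, w))

lemma degree_le_card {n : ℕ} (v : Fin n) (ω : Sym2 (Fin n) → Bool) :
    ((graphOf ω).neighborSet v).ncard ≤ ((starAt v).filter fun e => ω e = true).card := by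
  rw [← Set.ncard_coe_finset]
  refine Set.ncard_le_ncard_of_injOn (fun w => s(v, w)) ?_ ?_ (Finset.finite_toSet _)
  · intro w hw
    have h : ω s(v, w) = true := by
      have hw' : (graphOf ω).Adj v w := hw
      rw [graphOf, SimpleGraph.fromEdgeSet_adj] at hw'
      exact hw'.1
    simp [starAt, h]
  · intro a _ b _ hab
    exact Sym2.congr_right.1 hab

instance isFiniteMeasure_bernoulliMeasure (p : ℝ≥0) : IsFiniteMeasure (bernoulliMeasure p) := by
  unfold bernoulliMeasure
  infer_instance

instance isFiniteMeasure_erdosRenyi (n : ℕ) (p : ℝ≥0) : IsFiniteMeasure (erdosRenyi n p) := by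
  unfold erdosRenyi
  infer_instance

lemma integral_bernoulliMeasure {p : ℝ≥0} (hp : p ≤ 1) (f : Bool → ℝ) :
    ∫ b, f b ∂bernoulliMeasure p = p * f true + (1 - p) * f false := by
  rw [bernoulliMeasure, integral_add_measure Integrable.of_finite Integrable.of_finite,
    integral_smul_nnreal_measure, integral_smul_nnreal_measure, integral_dirac, integral_dirac]
  simp [NNReal.smul_def, NNReal.coe_sub hp]

lemma twoPow_starAt_eq_prod {n : ℕ} (v : Fin n) (ω : Sym2 (Fin n) → Bool) :
    (2 : ℝ) ^ ((starAt v).filter fun e => ω e = true).card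
      = ∏ e, (if e ∈ starAt v then (if ω e = true then (2 : ℝ) else 1) else 1) := by
  rw [Finset.prod_ite_mem, Finset.univ_inter, ← Finset.prod_filter, Finset.prod_const]

lemma integral_twoPow_starAt_le {n : ℕ} {p : ℝ≥0} (hp : p ≤ 1) (v : Fin n) :
    ∫ ω, (2 : ℝ) ^ ((starAt v).filter fun e => ω e = true).card ∂erdosRenyi n p
      ≤ Real.exp (n * p) := by
  simp_rw [twoPow_starAt_eq_prod]
  rw [erdosRenyi, integral_fintype_prod_eq_prod
    (f := fun e b => if e ∈ starAt v then (if b = true then (2 : ℝ) else 1) else 1)]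
  have h : ∀ e : Sym2 (Fin n), (∫ b, (if e ∈ starAt v then (if b = true then (2 : ℝ) else 1) else 1)
      ∂bernoulliMeasure p) = if e ∈ starAt v then (1 + p : ℝ) else 1 := by
    intro e
    rw [integral_bernoulliMeasure hp]
    split_ifs <;> simp_all; ring
  simp_rw [h]
  rw [Finset.prod_ite_mem, Finset.univ_inter, Finset.prod_const, Real.exp_nat_mul]
  calc (1 + p : ℝ) ^ (starAt v).card ≤ (1 + p : ℝ) ^ n :=
        pow_le_pow_right₀ (by simp) (card_starAt_le v)
    _ ≤ Real.exp p ^ n := by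
        gcongr
        rw [add_comm]
        exact Real.add_one_le_exp _

/-- The Chernoff bound for the degree of `v`, with exponential base `2`. -/
lemma degree_tail_le {n : ℕ} {p : ℝ≥0} (hp : p ≤ 1) (v : Fin n) (x : ℝ) :
    (erdosRenyi n p).real {ω | x ≤ (((graphOf ω).neighborSet v).ncard : ℝ)}
      ≤ Real.exp (n * p - x * Real.log 2) := by
  have hsub : {ω | x ≤ (((graphOf ω).neighborSet v).ncard : ℝ)} ⊆
      {ω | Real.exp (x * Real.log 2) ≤ (2 : ℝ) ^ ((starAt v).filter fun e => ω e = true).card} := by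
    intro ω hω
    have h1 : x ≤ (((starAt v).filter fun e => ω e = true).card : ℝ) :=
      le_trans hω (by exact_mod_cast degree_le_card v ω)
    rw [Set.mem_ofPred_eq]
    calc Real.exp (x * Real.log 2)
        ≤ Real.exp (((starAt v).filter fun e => ω e = true).card * Real.log 2) := by
          gcongr
      _ = _ := by rw [Real.exp_nat_mul, Real.exp_log (by norm_num)]
  have hM := mul_meas_ge_le_integral_of_nonneg (μ := erdosRenyi n p)
    (f := fun ω => (2 : ℝ) ^ ((starAt v).filter fun e => ω e = true).card)
    (Filter.Eventually.of_forall fun ω => by positivity) Integrable.of_finite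
    (Real.exp (x * Real.log 2))
  rw [Real.exp_sub, le_div_iff₀ (Real.exp_pos _), mul_comm]
  refine le_trans ?_ (hM.trans (integral_twoPow_starAt_le hp v))
  exact mul_le_mul_of_nonneg_left (measureReal_mono hsub) (Real.exp_pos _).le

/-- For `n ≥ 32` and `1 ≤ d ≤ n`, the probability that the maximum degree of
`G(n, d/n)` is at least `(log n)^2 · d` is at most `n^(1 - (log n)/4)`. -/
theorem max_degree_prob_le
    (n : ℕ) (hn : 32 ≤ n) (d : ℝ) (hd1 : 1 ≤ d) (hdn : d ≤ n) :
    erdosRenyi n (Real.toNNReal (d / n))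
      {ω | ∃ v : Fin n,
        (Real.log n) ^ 2 * d ≤ (((graphOf ω).neighborSet v).ncard : ℝ)}
      ≤ ENNReal.ofReal ((n : ℝ) ^ (1 - Real.log n / 4)) := by
  have hn0 : (0 : ℝ) < n := by positivity
  set L := Real.log n with hL
  have hL2 : 2 ≤ L := by
    have h1 : Real.log 32 ≤ L := Real.log_le_log (by norm_num) (by exact_mod_cast hn)
    have h2 : Real.log 32 = 5 * Real.log 2 := by
      rw [show (32 : ℝ) = 2 ^ 5 by norm_num, Real.log_pow]; norm_num
    linarith [Real.log_two_gt_d9]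
  set p := Real.toNNReal (d / n) with hp
  have hp1 : p ≤ 1 := by
    rw [hp, Real.toNNReal_le_one]
    exact (div_le_one hn0).2 hdn
  have hnp : (n : ℝ) * p = d := by
    rw [hp, Real.coe_toNNReal _ (by positivity)]
    field_simp
  have hexp : (n : ℝ) * p - L ^ 2 * d * Real.log 2 ≤ -(L ^ 2 / 4) := by
    rw [hnp]
    have h1 : L ^ 2 / 4 ≤ L ^ 2 * Real.log 2 - 1 := by nlinarith [Real.log_two_gt_d9]
    nlinarith [mul_le_mul hd1 h1 (by positivity) (by linarith)]
  rw [← ofReal_measureReal]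
  apply ENNReal.ofReal_le_ofReal
  rw [Set.ofPred_exists]
  calc (erdosRenyi n p).real
        (⋃ v : Fin n, {ω | L ^ 2 * d ≤ (((graphOf ω).neighborSet v).ncard : ℝ)})
      ≤ ∑ v : Fin n, (erdosRenyi n p).real
          {ω | L ^ 2 * d ≤ (((graphOf ω).neighborSet v).ncard : ℝ)} :=
        measureReal_iUnion_fintype_le _
    _ ≤ ∑ _v : Fin n, Real.exp (-(L ^ 2 / 4)) :=
        Finset.sum_le_sum fun v _ =>
          (degree_tail_le hp1 v _).trans (Real.exp_le_exp.2 hexp)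
    _ = (n : ℝ) ^ (1 - L / 4) := by
        rw [Real.rpow_def_of_pos hn0, ← hL, Finset.sum_const, Finset.card_univ, Fintype.card_fin,
          nsmul_eq_mul]
        nth_rewrite 1 [← Real.exp_log hn0]
        rw [← hL, ← Real.exp_add]
        congr 1
        ring
end

section
/- Let n ≥ 32 be an integer, let d be a real number with 1 ≤ d ≤ n, and let r ≥ 1 be an integer. With probability at least 1 − n^{1 − (log n)/4}, every r-neighborhood of the Erdős–Rényi random graph G(n, d/n) has size at most ((log n)^2 · d + 1)^r, i.e., |N_r(v)| ≤ ((log n)^2 · d + 1)^r for every vertex v. -/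
/-!
If every vertex has at most `Δ` neighbours, the ball of radius `r + 1` about `v` is covered by the at
most `Δ + 1` balls of radius `r` about `v` and its neighbours, so by induction every `r`-ball has at
most `(Δ + 1) ^ r` vertices
(`ncard_neighborhoodBall_le`).  It therefore suffices to bound all degrees by `Δ = (log n)² d`.

The degree of `v` is at most the number of `u` for which the indicator of `s(v, u)` is true, a sum
of `n` independent Bernoulli variables with mean `d / n` (the loop `u = v` is counted too; this only
weakens the bound).  Its exponential moment at parameter `1` is at most `exp ((e - 1) d)`
(`lintegral_edgeWeight_prod_le`), so by Markov's inequality the degree exceeds `Δ` with probability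
at most `exp ((e - 1) d - (log n)² d)`.  As `d ≥ 1` and `(log n)² ≥ 9`, this is at most
`exp (-(log n)² / 4) = n ^ (-(log n) / 4)`, and a union bound over the `n` vertices gives the claim.
-/

open MeasureTheory
open scoped NNReal ENNReal

/-- The set of `u` for which the potential edge `s(v, u)` is present, `u = v` being allowed. -/
def presentNbrs {n : ℕ} (ω : Sym2 (Fin n) → Bool) (v : Fin n) : Finset (Fin n) :=
  Finset.univ.filter fun u => ω s(v, u) = true

/-- The factor contributed by the potential edge `e` to the exponential of the number of present
edges at `v`: `exp 1` if `e` contains `v` and is present, and `1` otherwise. -/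
noncomputable def edgeWeight {n : ℕ} (v : Fin n) (e : Sym2 (Fin n)) (b : Bool) : ℝ≥0∞ :=
  if e ∈ Finset.univ.image (fun u => s(v, u)) ∧ b = true then ENNReal.ofReal (Real.exp 1) else 1

theorem ncard_neighborhoodBall_le {n : ℕ} (ω : Sym2 (Fin n) → Bool) (Δ : ℝ)
    (h : ∀ v, ((presentNbrs ω v).card : ℝ) ≤ Δ) (v : Fin n) (r : ℕ) :
    ((neighborhoodBall (graphOf ω) v r).ncard : ℝ) ≤ (Δ + 1) ^ r := by
  classical
  have hΔ : 0 ≤ Δ := le_trans (Nat.cast_nonneg _) (h v)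
  induction r generalizing v with
  | zero =>
    have hs : neighborhoodBall (graphOf ω) v 0 ⊆ {v} := by
      rintro u ⟨w, hw⟩
      exact (SimpleGraph.Walk.eq_of_length_eq_zero (Nat.le_zero.mp hw)).symm
    have := Set.ncard_le_ncard hs (Set.toFinite _)
    rw [Set.ncard_singleton] at this
    simpa using this
  | succ r ih =>
    have hs : neighborhoodBall (graphOf ω) v (r + 1) ⊆
        ⋃ u ∈ insert v (presentNbrs ω v), neighborhoodBall (graphOf ω) u r := by
      rintro x ⟨w, hw⟩
      simp only [Set.mem_iUnion]
      cases w with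
      | nil => exact ⟨v, Finset.mem_insert_self _ _, SimpleGraph.Walk.nil, by simp⟩
      | cons hadj w' =>
        rename_i u
        refine ⟨u, Finset.mem_insert_of_mem ?_, w', by simpa using hw⟩
        have hadj' := hadj
        simp only [graphOf, SimpleGraph.fromEdgeSet_adj, Set.mem_ofPred_eq] at hadj'
        simp [presentNbrs, hadj'.1]
    have h1 := Set.ncard_le_ncard hs (Set.toFinite _)
    have h2 := Finset.set_ncard_biUnion_le (insert v (presentNbrs ω v))
      (fun u => neighborhoodBall (graphOf ω) u r)
    have h3 : ((neighborhoodBall (graphOf ω) v (r + 1)).ncard : ℝ) ≤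
        ∑ u ∈ insert v (presentNbrs ω v), ((neighborhoodBall (graphOf ω) u r).ncard : ℝ) := by
      exact_mod_cast h1.trans h2
    have h4 : (((insert v (presentNbrs ω v)).card : ℕ) : ℝ) ≤ Δ + 1 := by
      have := Finset.card_insert_le v (presentNbrs ω v)
      have h5 : (((insert v (presentNbrs ω v)).card : ℕ) : ℝ) ≤ (presentNbrs ω v).card + 1 := by
        exact_mod_cast this
      linarith [h v]
    calc _ ≤ _ := h3
      _ ≤ ∑ u ∈ insert v (presentNbrs ω v), (Δ + 1) ^ r := Finset.sum_le_sum fun u _ => ih u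
      _ = ((insert v (presentNbrs ω v)).card : ℝ) * (Δ + 1) ^ r := by
        rw [Finset.sum_const, nsmul_eq_mul]
      _ ≤ (Δ + 1) * (Δ + 1) ^ r := by gcongr
      _ = (Δ + 1) ^ (r + 1) := by ring

theorem lintegral_bernoulliMeasure (p : ℝ≥0) (f : Bool → ℝ≥0∞) :
    ∫⁻ b, f b ∂(bernoulliMeasure p) = p * f true + ((1 - p : ℝ≥0) : ℝ≥0∞) * f false := by
  rw [bernoulliMeasure, lintegral_add_measure, lintegral_smul_measure, lintegral_smul_measure,
    lintegral_dirac, lintegral_dirac, ENNReal.smul_def, ENNReal.smul_def, smul_eq_mul, smul_eq_mul]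

/-- The exact value for `e` containing `v` is `1 + p (exp 1 - 1)`, and `1 + x ≤ exp x`. -/
theorem lintegral_edgeWeight_le {n : ℕ} {p : ℝ≥0} (hp : p ≤ 1) (v : Fin n) (e : Sym2 (Fin n)) :
    ∫⁻ b, edgeWeight v e b ∂(bernoulliMeasure p) ≤
      if e ∈ Finset.univ.image (fun u => s(v, u)) then
        ENNReal.ofReal (Real.exp (p * (Real.exp 1 - 1))) else 1 := by
  have hp' : (p : ℝ) ≤ 1 := hp
  rw [lintegral_bernoulliMeasure]
  split_ifs with he
  · simp only [edgeWeight, he, true_and, if_true, Bool.false_eq_true, if_false, mul_one]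
    rw [← ENNReal.ofReal_coe_nnreal, ← ENNReal.ofReal_coe_nnreal, NNReal.coe_sub hp,
      NNReal.coe_one, ← ENNReal.ofReal_mul p.coe_nonneg,
      ← ENNReal.ofReal_add (by positivity) (by linarith)]
    apply ENNReal.ofReal_le_ofReal
    have := Real.add_one_le_exp ((p : ℝ) * (Real.exp 1 - 1))
    linarith
  · simp only [edgeWeight, he, false_and, if_false, mul_one]
    rw [← ENNReal.coe_add, add_tsub_cancel_of_le hp, ENNReal.coe_one]

theorem card_starEdges {n : ℕ} (v : Fin n) (s : Finset (Fin n)) :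
    (s.image (fun u => s(v, u))).card = s.card := by
  apply Finset.card_image_of_injective
  intro a b hab
  exact Sym2.congr_right.mp hab

/-- Bound on the exponential moment of the number of present edges at `v`. -/
theorem lintegral_edgeWeight_prod_le {n : ℕ} {p : ℝ≥0} (hp : p ≤ 1) (v : Fin n) :
    ∫⁻ ω, ∏ e, edgeWeight v e (ω e) ∂(erdosRenyi n p) ≤
      ENNReal.ofReal (Real.exp (n * (p * (Real.exp 1 - 1)))) := by
  have := isProbabilityMeasure_bernoulliMeasure hp
  have hmeas : ∀ e, Measurable (edgeWeight v e) := fun e => measurable_of_finite _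
  rw [erdosRenyi, ProbabilityTheory.lintegral_prod_eq_prod_lintegral_of_indepFun _
    (fun (e : Sym2 (Fin n)) (ω : Sym2 (Fin n) → Bool) => edgeWeight v e (ω e))
    (ProbabilityTheory.iIndepFun_pi fun e => (hmeas e).aemeasurable)
    (fun e => (hmeas e).comp (measurable_pi_apply e))]
  have heval : ∀ e, ∫⁻ ω, edgeWeight v e (ω e)
      ∂(Measure.pi fun _ : Sym2 (Fin n) => bernoulliMeasure p) =
      ∫⁻ b, edgeWeight v e b ∂(bernoulliMeasure p) := fun e =>
    (measurePreserving_eval (fun _ : Sym2 (Fin n) => bernoulliMeasure p) e).lintegral_comp (hmeas e)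
  simp only [heval]
  refine (Finset.prod_le_prod' fun e _ => lintegral_edgeWeight_le hp v e).trans ?_
  rw [Finset.prod_ite, Finset.prod_const_one, mul_one, Finset.prod_const]
  rw [Finset.filter_mem_eq_inter, Finset.univ_inter, card_starEdges, Finset.card_univ,
    Fintype.card_fin, ← ENNReal.ofReal_pow (Real.exp_pos _).le, ← Real.exp_nat_mul]

theorem edgeWeight_prod {n : ℕ} (v : Fin n) (ω : Sym2 (Fin n) → Bool) :
    ∏ e, edgeWeight v e (ω e) = ENNReal.ofReal (Real.exp (presentNbrs ω v).card) := by
  have hf : (Finset.univ.filter fun e : Sym2 (Fin n) =>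
      e ∈ Finset.univ.image (fun u => s(v, u)) ∧ ω e = true) =
      (presentNbrs ω v).image (fun u => s(v, u)) := by
    ext e
    simp only [presentNbrs, Finset.mem_filter, Finset.mem_univ, true_and, Finset.mem_image]
    constructor
    · rintro ⟨⟨u, rfl⟩, h⟩
      exact ⟨u, h, rfl⟩
    · rintro ⟨u, h, rfl⟩
      exact ⟨⟨u, rfl⟩, h⟩
  simp only [edgeWeight]
  rw [Finset.prod_ite, Finset.prod_const_one, mul_one, Finset.prod_const, hf, card_starEdges,
    ← ENNReal.ofReal_pow (Real.exp_pos _).le, ← Real.exp_nat_mul, mul_one]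

/-- Chernoff bound with exponential parameter `1`. -/
theorem measure_presentNbrs_gt_le {n : ℕ} {p : ℝ≥0} (hp : p ≤ 1) (v : Fin n) (a : ℝ) :
    erdosRenyi n p {ω | a < (presentNbrs ω v).card} ≤
      ENNReal.ofReal (Real.exp (n * (p * (Real.exp 1 - 1)) - a)) := by
  have hsub : {ω | a < ((presentNbrs ω v).card : ℝ)} ⊆
      {ω | ENNReal.ofReal (Real.exp a) ≤ ∏ e, edgeWeight v e (ω e)} := by
    intro ω hω
    simp only [Set.mem_ofPred_eq] at hω ⊢
    rw [edgeWeight_prod]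
    exact ENNReal.ofReal_le_ofReal (Real.exp_le_exp.mpr hω.le)
  refine (measure_mono hsub).trans ?_
  have hm : Measurable fun ω : Sym2 (Fin n) → Bool => ∏ e, edgeWeight v e (ω e) :=
    measurable_of_finite _
  refine (meas_ge_le_lintegral_div hm.aemeasurable ?_ ENNReal.ofReal_ne_top).trans ?_
  · simpa using Real.exp_pos a
  · rw [Real.exp_sub, ENNReal.ofReal_div_of_pos (Real.exp_pos _)]
    exact ENNReal.div_le_div_right (lintegral_edgeWeight_prod_le hp v) _

/-- For `n ≥ 32`, `1 ≤ d ≤ n` and `r ≥ 1`: with probability at least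
`1 - n^(1 - (log n)/4)`, every `r`-neighborhood of `G(n, d/n)` has size at most
`((log n)^2 · d + 1)^r`. -/
theorem all_balls_small_prob_ge
    (n : ℕ) (hn : 32 ≤ n) (d : ℝ) (hd1 : 1 ≤ d) (hdn : d ≤ n)
    (r : ℕ) (hr : 1 ≤ r) :
    1 - ENNReal.ofReal ((n : ℝ) ^ (1 - Real.log n / 4))
      ≤ erdosRenyi n (Real.toNNReal (d / n))
          {ω | ∀ v : Fin n,
            ((neighborhoodBall (graphOf ω) v r).ncard : ℝ)
              ≤ ((Real.log n) ^ 2 * d + 1) ^ r} := by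
  have hn0 : (0 : ℝ) < n := by
    have : 0 < n := by omega
    exact_mod_cast this
  set L := Real.log n with hL
  set p := Real.toNNReal (d / n) with hp_def
  have hpr : (p : ℝ) = d / n := Real.coe_toNNReal _ (by positivity)
  have hp : p ≤ 1 := by
    rw [← NNReal.coe_le_coe, hpr, NNReal.coe_one, div_le_one hn0]
    exact hdn
  -- `32 = 2 ^ 5` and `log 2 > 0.6`, so `log n > 3`.
  have hL3 : 3 ≤ L := by
    have h1 : Real.log 32 ≤ L := Real.log_le_log (by norm_num) (by exact_mod_cast hn)
    have h2 : Real.log 32 = 5 * Real.log 2 := by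
      rw [show (32 : ℝ) = 2 ^ 5 by norm_num, Real.log_pow]
      norm_num
    have := Real.log_two_gt_d9
    linarith
  have hL2 : 9 ≤ L ^ 2 := by nlinarith
  have : IsProbabilityMeasure (bernoulliMeasure p) := isProbabilityMeasure_bernoulliMeasure hp
  have : IsProbabilityMeasure (erdosRenyi n p) := by unfold erdosRenyi; infer_instance
  have hone : ∀ v : Fin n, erdosRenyi n p {ω | L ^ 2 * d < (presentNbrs ω v).card} ≤
      ENNReal.ofReal (Real.exp (-(L ^ 2 / 4))) := by
    intro v
    refine (measure_presentNbrs_gt_le hp v _).trans (ENNReal.ofReal_le_ofReal ?_)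
    apply Real.exp_le_exp.mpr
    have he := Real.exp_one_lt_d9
    have h1 : (n : ℝ) * (p * (Real.exp 1 - 1)) = d * (Real.exp 1 - 1) := by
      rw [hpr]; field_simp
    rw [h1]
    have h2 : d * (Real.exp 1 - 1) ≤ d * 2 := by
      apply mul_le_mul_of_nonneg_left _ (by linarith)
      linarith
    have h3 : 1 * (L ^ 2 - 2) ≤ d * (L ^ 2 - 2) := by
      apply mul_le_mul_of_nonneg_right hd1
      linarith
    nlinarith
  have hbad : erdosRenyi n p (⋃ v : Fin n, {ω | L ^ 2 * d < (presentNbrs ω v).card}) ≤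
      ENNReal.ofReal ((n : ℝ) ^ (1 - L / 4)) := by
    refine (measure_iUnion_fintype_le _ _).trans ?_
    refine (Finset.sum_le_sum fun v _ => hone v).trans ?_
    rw [Finset.sum_const, Finset.card_univ, Fintype.card_fin, nsmul_eq_mul,
      ← ENNReal.ofReal_natCast, ← ENNReal.ofReal_mul hn0.le]
    apply ENNReal.ofReal_le_ofReal
    rw [Real.rpow_def_of_pos hn0, ← hL, show L * (1 - L / 4) = L + -(L ^ 2 / 4) by ring,
      Real.exp_add, hL, Real.exp_log hn0]
  have hcover : (Set.univ : Set (Sym2 (Fin n) → Bool)) ⊆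
      {ω | ∀ v : Fin n, ((neighborhoodBall (graphOf ω) v r).ncard : ℝ) ≤ (L ^ 2 * d + 1) ^ r} ∪
      ⋃ v : Fin n, {ω | L ^ 2 * d < (presentNbrs ω v).card} := by
    intro ω _
    by_cases h : ∀ v, ((presentNbrs ω v).card : ℝ) ≤ L ^ 2 * d
    · exact Or.inl fun v => ncard_neighborhoodBall_le ω _ h v r
    · push Not at h
      exact Or.inr (Set.mem_iUnion.mpr h)
  rw [tsub_le_iff_right]
  calc (1 : ℝ≥0∞) = erdosRenyi n p Set.univ := measure_univ.symm
    _ ≤ _ := measure_mono hcover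
    _ ≤ _ := measure_union_le _ _
    _ ≤ _ := by gcongr
end
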